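/- Let D be an integer with D > (576 log 2)³ + 3 and σ, R > 0 with R² > σ²(D−1). Set s⋆ = √(R² − σ²(D−3)), š⋆ = √(R² − σ²(D−1)), and ν̌² = σ⁴(D−1)/(2š⋆²). Suppose 576 log(2) · σ² D^{2/3} ≤ s⋆² ≤ 3σ²D. Then the convolution [φ ∗ h](s) satisfies [φ ∗ h](s) ≤ 1 for all 0 ≤ s < š⋆, and [φ ∗ h](s) ≤ 4 · exp(−(s − š⋆)²/(2(ν̌² + σ²))) for all s ≥ š⋆. -/

import Mathlib

/-!
Both bounds come from a single Chernoff argument, with constant `1` in place of `4`.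

The function `h` is the distribution function of a Gamma variable of shape `a = (D - 1)/2`,
evaluated at `(R² - t²)/(2σ²)`.  The Chernoff bound and `log (1 + μ) ≥ μ - μ²/2` show that a Gamma
variable has a sub-Gaussian lower tail, with its own variance as variance proxy.  Bounding
`t² ≥ 2tš⋆ - š⋆²` linearises the exponent in `t`: for all `θ ≥ 0` and all real `t`,
`h t ≤ exp (θ² ν̌²/2 - θ (t - š⋆))`.  Convolving with `φ` integrates these log-linear bounds against
a Gaussian, so it merely replaces `ν̌²` by `ν̌² + σ²`.  Then `θ = 0` gives the first bound and
`θ = (s - š⋆)/(ν̌² + σ²)` the second.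
-/


open MeasureTheory

/-- `h(s) = (1/Γ((D-1)/2)) ∫₀^{max{0,(R²-s²)/(2σ²)}} t^((D-3)/2) e^(-t) dt`, the
probability that a chi-square random variable with `D-1` degrees of freedom is at
most `(R² - s²)/σ²`. -/
noncomputable def hFun (D : ℕ) (σ R : ℝ) (s : ℝ) : ℝ :=
  (1 / Real.Gamma (((D : ℝ) - 1) / 2)) *
    ∫ t in (0 : ℝ)..(max 0 ((R ^ 2 - s ^ 2) / (2 * σ ^ 2))),
      t ^ (((D : ℝ) - 3) / 2) * Real.exp (-t)

/-- The centered Gaussian density with standard deviation `σ`. -/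
noncomputable def gaussPdf (σ : ℝ) (v : ℝ) : ℝ :=
  (1 / (Real.sqrt (2 * Real.pi) * σ)) * Real.exp (-v ^ 2 / (2 * σ ^ 2))

/-- Convolution `[φ ∗ f](t) = ∫ φ(v) f(t - v) dv` with the Gaussian density. -/
noncomputable def gaussConv (σ : ℝ) (f : ℝ → ℝ) (t : ℝ) : ℝ :=
  ∫ v : ℝ, gaussPdf σ v * f (t - v)

open ProbabilityTheory Real

section GammaTail

variable {a r : ℝ}

lemma gammaPDFReal_eq_indicator (a r : ℝ) :
    gammaPDFReal a r =
      (Set.Ici 0).indicator fun x ↦ r ^ a / Gamma a * (x ^ (a - 1) * exp (-(r * x))) := by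
  ext x
  simp only [gammaPDFReal, Set.indicator_apply, Set.mem_Ici, mul_assoc]

lemma cdf_gammaMeasure_eq_intervalIntegral (ha : 0 < a) (hr : 0 < r) (x : ℝ) :
    cdf (gammaMeasure a r) x =
      r ^ a / Gamma a * ∫ t in (0 : ℝ)..max 0 x, t ^ (a - 1) * exp (-(r * t)) := by
  rw [cdf_gammaMeasure_eq_integral ha hr, gammaPDFReal_eq_indicator,
    setIntegral_indicator measurableSet_Ici, Set.inter_comm, Set.Ici_inter_Iic,
    integral_const_mul]
  rcases le_total 0 x with hx | hx
  · rw [max_eq_right hx, intervalIntegral.integral_of_le hx, integral_Icc_eq_integral_Ioc]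
  · rw [max_eq_left hx, intervalIntegral.integral_same, integral_Icc_eq_integral_Ioc,
      Set.Ioc_eq_empty hx.not_gt, setIntegral_empty]

lemma mgf_id_gammaMeasure (ha : 0 < a) (hr : 0 < r) {t : ℝ} (ht : t < r) :
    mgf id (gammaMeasure a r) t = (r / (r - t)) ^ a := by
  have hrt : 0 < r - t := sub_pos.2 ht
  calc mgf id (gammaMeasure a r) t
      = ∫ x, gammaPDFReal a r x * exp (t * x) := by
        have hmeas : Measurable (gammaPDF a r) := (measurable_gammaPDFReal a r).ennreal_ofReal
        rw [mgf, gammaMeasure,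
          integral_withDensity_eq_integral_toReal_smul hmeas (by simp [gammaPDF])]
        simp only [gammaPDF, ENNReal.toReal_ofReal (gammaPDFReal_nonneg ha hr _), smul_eq_mul,
          id_eq]
    _ = ∫ x in Set.Ioi 0, r ^ a / Gamma a * (x ^ (a - 1) * exp (-((r - t) * x))) := by
        rw [← integral_Ici_eq_integral_Ioi, ← integral_indicator measurableSet_Ici,
          gammaPDFReal_eq_indicator]
        congr 1 with x
        simp only [Set.indicator_apply, ite_mul, zero_mul, mul_assoc, ← exp_add]
        ring_nf
    _ = r ^ a / Gamma a * ((1 / (r - t)) ^ a * Gamma a) := by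
        rw [integral_const_mul, integral_rpow_mul_exp_neg_mul_Ioi ha hrt]
    _ = (r / (r - t)) ^ a := by
        rw [div_rpow hr.le hrt.le, div_rpow zero_le_one hrt.le, one_rpow]
        field_simp [(Gamma_pos_of_pos ha).ne']

lemma sub_sq_div_two_le_log_one_add {x : ℝ} (hx : 0 ≤ x) : x - x ^ 2 / 2 ≤ log (1 + x) := by
  refine le_trans ?_ (le_log_one_add_of_nonneg hx)
  rw [le_div_iff₀ (by linarith)]
  nlinarith [pow_nonneg hx 3]

-- The mean of the Gamma distribution is `a / r` and its variance is `a / r ^ 2`.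
lemma cdf_gammaMeasure_le_exp (ha : 0 < a) (hr : 0 < r) {μ : ℝ} (hμ : 0 ≤ μ) (x : ℝ) :
    cdf (gammaMeasure a r) x ≤ exp (μ * (x - a / r) + a / r ^ 2 * μ ^ 2 / 2) := by
  have := isProbabilityMeasure_gammaMeasure ha hr
  have hmgf : mgf id (gammaMeasure a r) (-μ) = (r / (r + μ)) ^ a := by
    rw [mgf_id_gammaMeasure ha hr (by linarith), sub_neg_eq_add]
  have hint : Integrable (fun y ↦ exp (-μ * id y)) (gammaMeasure a r) :=
    .of_integral_ne_zero (hmgf.trans_ne (by positivity))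
  have hlog : log (r / (r + μ)) ≤ -(μ / r - (μ / r) ^ 2 / 2) := by
    rw [← inv_div, log_inv, add_div, div_self hr.ne']
    exact neg_le_neg (sub_sq_div_two_le_log_one_add (by positivity))
  calc cdf (gammaMeasure a r) x
      ≤ exp (-(-μ) * x) * mgf id (gammaMeasure a r) (-μ) := by
        rw [cdf_eq_real]
        exact measure_le_le_exp_mul_mgf x (by linarith) hint
    _ = exp (μ * x + log (r / (r + μ)) * a) := by
        rw [hmgf, rpow_def_of_pos (by positivity), neg_neg, exp_add]
    _ ≤ exp (μ * x + -(μ / r - (μ / r) ^ 2 / 2) * a) := by gcongr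
    _ = exp (μ * (x - a / r) + a / r ^ 2 * μ ^ 2 / 2) := by ring_nf

end GammaTail

/-- `f` decays like a Gaussian to the right of `c`, with variance proxy `w`.  For `w > 0` this says
`f t ≤ exp (-(t - c)₊² / (2 * w))`; it is encoded by the log-linear upper bounds of that profile
because these can be integrated against a Gaussian in closed form. -/
def IsRightSubgaussian (f : ℝ → ℝ) (c w : ℝ) : Prop :=
  ∀ θ, 0 ≤ θ → ∀ t, f t ≤ exp (θ ^ 2 * w / 2 - θ * (t - c))

lemma gaussPdf_eq_gaussianPDFReal {σ : ℝ} (hσ : 0 < σ) :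
    gaussPdf σ = gaussianPDFReal 0 (σ ^ 2).toNNReal := by
  ext v
  rw [gaussPdf, gaussianPDFReal, coe_toNNReal _ (sq_nonneg σ),
    sqrt_mul (by positivity : (0 : ℝ) ≤ 2 * π), sqrt_sq hσ.le, one_div, sub_zero]

lemma gaussConv_eq_integral_gaussianReal {σ : ℝ} (hσ : 0 < σ) (f : ℝ → ℝ) (t : ℝ) :
    gaussConv σ f t = ∫ x, f x ∂gaussianReal t (σ ^ 2).toNNReal := by
  have hv : (σ ^ 2).toNNReal ≠ 0 := (toNNReal_pos.2 (by positivity)).ne'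
  have hmap := gaussianReal_map_const_sub (μ := 0) (v := (σ ^ 2).toNNReal) t
  rw [sub_zero] at hmap
  rw [← hmap, (measurableEmbedding_subLeft t).integral_map,
    integral_gaussianReal_eq_integral_smul hv, ← gaussPdf_eq_gaussianPDFReal hσ]
  rfl

namespace IsRightSubgaussian

variable {f : ℝ → ℝ} {c w : ℝ}

lemma le_one (hf : IsRightSubgaussian f c w) (t : ℝ) : f t ≤ 1 := by
  simpa using hf 0 le_rfl t

lemma le_exp_neg_sq_div (hf : IsRightSubgaussian f c w) (hw : 0 < w) {t : ℝ} (ht : c ≤ t) :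
    f t ≤ exp (-(t - c) ^ 2 / (2 * w)) := by
  -- The exponent `θ² w / 2 - θ (t - c)` is minimal at `θ = (t - c) / w`.
  convert hf ((t - c) / w) (div_nonneg (sub_nonneg.2 ht) hw.le) t using 2
  field_simp
  ring

protected lemma gaussConv (hf : IsRightSubgaussian f c w) (hf₀ : 0 ≤ f) {σ : ℝ} (hσ : 0 < σ) :
    IsRightSubgaussian (gaussConv σ f) c (w + σ ^ 2) := by
  intro θ hθ t
  have hmgf : ∫ x, exp (-θ * x) ∂gaussianReal t (σ ^ 2).toNNReal =
      exp (t * -θ + σ ^ 2 * (-θ) ^ 2 / 2) := by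
    have h := congrFun (mgf_fun_id_gaussianReal (μ := t) (v := (σ ^ 2).toNNReal)) (-θ)
    rwa [mgf, coe_toNNReal _ (sq_nonneg σ)] at h
  calc gaussConv σ f t
      = ∫ x, f x ∂gaussianReal t (σ ^ 2).toNNReal := gaussConv_eq_integral_gaussianReal hσ f t
    _ ≤ ∫ x, exp (θ ^ 2 * w / 2 + θ * c) * exp (-θ * x) ∂gaussianReal t (σ ^ 2).toNNReal := by
        refine integral_mono_of_nonneg (.of_forall hf₀)
          ((integrable_exp_mul_gaussianReal (-θ)).const_mul _) (.of_forall fun x ↦ ?_)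
        refine (hf θ hθ x).trans_eq ?_
        simp only [← exp_add]
        ring_nf
    _ = exp (θ ^ 2 * (w + σ ^ 2) / 2 - θ * (t - c)) := by
        rw [integral_const_mul, hmgf, ← exp_add]
        ring_nf

end IsRightSubgaussian

section HFun

variable {D : ℕ} {σ R : ℝ}

lemma hFun_eq_cdf_gammaMeasure (hD : 1 < D) (σ R s : ℝ) :
    hFun D σ R s = cdf (gammaMeasure ((D - 1) / 2) 1) ((R ^ 2 - s ^ 2) / (2 * σ ^ 2)) := by
  have hD' : (1 : ℝ) < D := mod_cast hD
  rw [cdf_gammaMeasure_eq_intervalIntegral (by linarith) one_pos, hFun, one_rpow,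
    show ((D : ℝ) - 1) / 2 - 1 = (D - 3) / 2 by ring]
  simp only [one_mul]

lemma hFun_nonneg (hD : 1 < D) (σ R s : ℝ) : 0 ≤ hFun D σ R s := by
  rw [hFun_eq_cdf_gammaMeasure hD]
  exact cdf_nonneg _ _

lemma isRightSubgaussian_hFun (hD : 1 < D) (hσ : σ ≠ 0) {c : ℝ} (hc : 0 < c)
    (hcR : c ^ 2 = R ^ 2 - σ ^ 2 * (D - 1)) :
    IsRightSubgaussian (hFun D σ R) c (σ ^ 4 * (D - 1) / (2 * c ^ 2)) := by
  intro θ hθ t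
  have hD' : (1 : ℝ) < D := mod_cast hD
  set a : ℝ := (D - 1) / 2 with ha
  -- This tilt gives the Chernoff exponent slope `-θ` at `t = c`.
  set μ : ℝ := θ * σ ^ 2 / c with hμ
  set T : ℝ := (R ^ 2 - t ^ 2) / (2 * σ ^ 2) with hT
  have linearization_error :
      θ ^ 2 * (σ ^ 4 * (D - 1) / (2 * c ^ 2)) / 2 - θ * (t - c) -
        (μ * (T - a) + a * μ ^ 2 / 2) = θ * (t - c) ^ 2 / (2 * c) := by
    rw [hμ, hT, ha, show R ^ 2 = c ^ 2 + σ ^ 2 * (D - 1) by linarith]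
    field_simp
    ring
  calc hFun D σ R t
      = cdf (gammaMeasure a 1) T := hFun_eq_cdf_gammaMeasure hD σ R t
    _ ≤ exp (μ * (T - a) + a * μ ^ 2 / 2) := by
        simpa using cdf_gammaMeasure_le_exp (by linarith : 0 < a) one_pos
          (by positivity : 0 ≤ μ) T
    _ ≤ exp (θ ^ 2 * (σ ^ 4 * (D - 1) / (2 * c ^ 2)) / 2 - θ * (t - c)) := by
        have : 0 ≤ θ * (t - c) ^ 2 / (2 * c) := by positivity
        exact exp_le_exp.2 (by linarith)

end HFun

theorem gauss_conv_h_upper_bounds_general {D : ℕ} (hD : 1 < D) {σ R : ℝ} (hσ : 0 < σ)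
    (hRD : σ ^ 2 * ((D : ℝ) - 1) < R ^ 2) {scheck νcheck : ℝ}
    (hscheck : scheck = √(R ^ 2 - σ ^ 2 * ((D : ℝ) - 1)))
    (hνcheck : νcheck = √(σ ^ 4 * ((D : ℝ) - 1) / (2 * scheck ^ 2))) :
    (∀ s, gaussConv σ (hFun D σ R) s ≤ 1) ∧
    ∀ s, scheck ≤ s →
      gaussConv σ (hFun D σ R) s ≤
        exp (-(s - scheck) ^ 2 / (2 * (νcheck ^ 2 + σ ^ 2))) := by
  have hD' : (0 : ℝ) ≤ D - 1 := sub_nonneg.2 (mod_cast hD.le)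
  have hc : 0 < scheck := hscheck ▸ sqrt_pos.2 (sub_pos.2 hRD)
  have hcR : scheck ^ 2 = R ^ 2 - σ ^ 2 * (D - 1) := by
    rw [hscheck, sq_sqrt (sub_nonneg.2 hRD.le)]
  have hν : νcheck ^ 2 = σ ^ 4 * (D - 1) / (2 * scheck ^ 2) := by
    rw [hνcheck, sq_sqrt (by positivity)]
  have hconv : IsRightSubgaussian (gaussConv σ (hFun D σ R)) scheck (νcheck ^ 2 + σ ^ 2) := by
    rw [hν]
    exact (isRightSubgaussian_hFun hD hσ.ne' hc hcR).gaussConv (hFun_nonneg hD σ R) hσ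
  exact ⟨hconv.le_one, fun s hs ↦ hconv.le_exp_neg_sq_div (by positivity) hs⟩

/-- **Upper bounds on `φ ∗ h`.**  With `s⋆ = √(R² - σ²(D-3))`,
`š⋆ = √(R² - σ²(D-1))`, `ν̌² = σ⁴(D-1)/(2š⋆²)`, if `D > (576 log 2)³ + 3` and
`576 log 2 · σ² D^(2/3) ≤ s⋆² ≤ 3σ²D`, then `[φ ∗ h](s) ≤ 1` for `0 ≤ s < š⋆` and
`[φ ∗ h](s) ≤ 4 exp(-(s - š⋆)²/(2(ν̌² + σ²)))` for `s ≥ š⋆`. -/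
theorem gauss_conv_h_upper_bounds (D : ℕ)
    (hD : (576 * Real.log 2) ^ 3 + 3 < (D : ℝ)) (σ R : ℝ)
    (hσ : 0 < σ) (hR : 0 < R) (hRD : σ ^ 2 * ((D : ℝ) - 1) < R ^ 2)
    (sstar scheck νcheck : ℝ)
    (hsstar : sstar = Real.sqrt (R ^ 2 - σ ^ 2 * ((D : ℝ) - 3)))
    (hscheck : scheck = Real.sqrt (R ^ 2 - σ ^ 2 * ((D : ℝ) - 1)))
    (hνcheck : νcheck = Real.sqrt (σ ^ 4 * ((D : ℝ) - 1) / (2 * scheck ^ 2)))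
    (hlow : 576 * Real.log 2 * σ ^ 2 * (D : ℝ) ^ ((2 : ℝ) / 3) ≤ sstar ^ 2)
    (hhigh : sstar ^ 2 ≤ 3 * σ ^ 2 * D) :
    (∀ s : ℝ, 0 ≤ s → s < scheck → gaussConv σ (hFun D σ R) s ≤ 1) ∧
    (∀ s : ℝ, scheck ≤ s →
      gaussConv σ (hFun D σ R) s ≤
        4 * Real.exp (-(s - scheck) ^ 2 / (2 * (νcheck ^ 2 + σ ^ 2)))) := by
  have hD1 : 1 < D := by
    have : (0 : ℝ) ≤ (576 * Real.log 2) ^ 3 := by positivity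
    exact_mod_cast (by linarith : (1 : ℝ) < D)
  obtain ⟨hone, hexp⟩ := gauss_conv_h_upper_bounds_general hD1 hσ hRD hscheck hνcheck
  exact ⟨fun s _ _ ↦ hone s, fun s hs ↦
    (hexp s hs).trans (le_mul_of_one_le_left (exp_nonneg _) (by norm_num))⟩
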